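/- Fix real numbers λ₁,λ₂,λ₃,λ₄, pairwise distinct, with λᵢ+λⱼ > 0 for all i ≠ j, and assume the three genericity inequalities λ₁+λ₄ ≠ λ₂+λ₃, λ₂+λ₄ ≠ λ₁+λ₃, λ₃+λ₄ ≠ λ₁+λ₂ all hold. Let p ∈ s₊ (respectively p ∈ s₋) be a nonzero point, i.e. p = (a₁/(λ₁+λ₄), a₂/(λ₂+λ₄), a₃/(λ₃+λ₄), ε a₁/(λ₂+λ₃), ε a₂/(λ₁+λ₃), ε a₃/(λ₁+λ₂)) with ε = +1 (resp. ε = −1) and (a₁,a₂,a₃) ≠ (0,0,0). Then C₁(p) > |C₂(p)| > 0; moreover C₂(p) > 0 if ε = +1 and C₂(p) < 0 if ε = −1. In particular every nonzero point of s₊ ∪ s₋ lies on a regular adjoint orbit with c₂ ≠ 0. -/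

import Mathlib

/-!
Since `ε² = 1`, pairing each `xᵢ = aᵢ/u` with `yᵢ = ε aᵢ/v`, where `u, v > 0` are the two
complementary sums of the `λ`'s, gives `C₂ = ε ∑ aᵢ²/(uv)`, so the sign of `C₂` is that of `ε`.
Moreover `C₁ - ε C₂ = ½ ∑ (aᵢ/u - aᵢ/v)²`, and genericity says `u ≠ v` for each pair, so
this is positive as soon as some `aᵢ` is nonzero. Both facts are the termwise inequalities
`pair_bounds` (weak form) and `pair_bounds_strict` (strict form for `aᵢ ≠ 0`).
-/

/-- The SO(4) free rigid body vector field on `ℝ⁶`, in coordinates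
`(x₁,x₂,x₃,y₁,y₂,y₃) = (p 0, p 1, p 2, p 3, p 4, p 5)`. -/
noncomputable def rbF (l1 l2 l3 l4 : ℝ) (p : Fin 6 → ℝ) : Fin 6 → ℝ :=
  ![(1/(l1+l2) - 1/(l1+l3)) * (p 1 * p 2) + (1/(l3+l4) - 1/(l2+l4)) * (p 4 * p 5),
    (1/(l2+l3) - 1/(l1+l2)) * (p 0 * p 2) + (1/(l1+l4) - 1/(l3+l4)) * (p 3 * p 5),
    (1/(l1+l3) - 1/(l2+l3)) * (p 0 * p 1) + (1/(l2+l4) - 1/(l1+l4)) * (p 3 * p 4),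
    (1/(l3+l4) - 1/(l1+l3)) * (p 1 * p 5) + (1/(l1+l2) - 1/(l2+l4)) * (p 2 * p 4),
    (1/(l2+l3) - 1/(l3+l4)) * (p 0 * p 5) + (1/(l1+l4) - 1/(l1+l2)) * (p 2 * p 3),
    (1/(l2+l4) - 1/(l2+l3)) * (p 0 * p 4) + (1/(l1+l3) - 1/(l1+l4)) * (p 1 * p 3)]

/-- The point of `s₊` (`ε = 1`) or `s₋` (`ε = -1`) with parameters `(a₁,a₂,a₃)`. -/
noncomputable def sPoint (l1 l2 l3 l4 ε a₁ a₂ a₃ : ℝ) : Fin 6 → ℝ :=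
  ![a₁/(l1+l4), a₂/(l2+l4), a₃/(l3+l4),
    ε * a₁/(l2+l3), ε * a₂/(l1+l3), ε * a₃/(l1+l2)]

/-- The Casimir function `C₁` on `so(4) ≅ ℝ⁶`. -/
noncomputable def C1fn (p : Fin 6 → ℝ) : ℝ :=
  (1/2) * (p 0^2 + p 1^2 + p 2^2 + p 3^2 + p 4^2 + p 5^2)

/-- The Casimir function `C₂` on `so(4) ≅ ℝ⁶`. -/
noncomputable def C2fn (p : Fin 6 → ℝ) : ℝ :=
  p 0 * p 3 + p 1 * p 4 + p 2 * p 5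

/-- Mishchenko's additional first integral `I` of the SO(4) free rigid body. -/
noncomputable def Ifn (l1 l2 l3 l4 : ℝ) (p : Fin 6 → ℝ) : ℝ :=
  (l2^2+l3^2) * p 0^2 + (l1^2+l3^2) * p 1^2 + (l1^2+l2^2) * p 2^2 +
    (l1^2+l4^2) * p 3^2 + (l2^2+l4^2) * p 4^2 + (l3^2+l4^2) * p 5^2

lemma pair_bounds {u v : ℝ} (a : ℝ) (hu : 0 < u) (hv : 0 < v) :
    0 ≤ a / u * (a / v) ∧ 2 * (a / u * (a / v)) ≤ (a / u) ^ 2 + (a / v) ^ 2 := by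
  constructor
  · rw [div_mul_div_comm]
    exact div_nonneg (mul_self_nonneg a) (mul_pos hu hv).le
  · nlinarith [sq_nonneg (a / u - a / v)]

lemma pair_bounds_strict {u v a : ℝ} (hu : 0 < u) (hv : 0 < v) (huv : u ≠ v) (ha : a ≠ 0) :
    0 < a / u * (a / v) ∧ 2 * (a / u * (a / v)) < (a / u) ^ 2 + (a / v) ^ 2 := by
  constructor
  · rw [div_mul_div_comm]
    exact div_pos (mul_self_pos.mpr ha) (mul_pos hu hv)
  · have hne : a / u - a / v ≠ 0 := by
      intro h
      rw [sub_eq_zero, div_eq_div_iff hu.ne' hv.ne'] at h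
      exact huv (mul_left_cancel₀ ha h).symm
    nlinarith [sq_pos_of_ne_zero hne]

/-- The strict bounds for the sums over the three pairs; these are `0 < C₂` and `C₂ < C₁`
at the point of `s₊` with parameters `(a₁, a₂, a₃)`. -/
lemma sum_bounds {u₁ v₁ u₂ v₂ u₃ v₃ a₁ a₂ a₃ : ℝ}
    (hu₁ : 0 < u₁) (hv₁ : 0 < v₁) (hu₂ : 0 < u₂) (hv₂ : 0 < v₂) (hu₃ : 0 < u₃) (hv₃ : 0 < v₃)
    (h₁ : u₁ ≠ v₁) (h₂ : u₂ ≠ v₂) (h₃ : u₃ ≠ v₃) (h0 : ¬(a₁ = 0 ∧ a₂ = 0 ∧ a₃ = 0)) :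
    0 < a₁ / u₁ * (a₁ / v₁) + a₂ / u₂ * (a₂ / v₂) + a₃ / u₃ * (a₃ / v₃) ∧
    a₁ / u₁ * (a₁ / v₁) + a₂ / u₂ * (a₂ / v₂) + a₃ / u₃ * (a₃ / v₃) <
      (1 / 2) * ((a₁ / u₁) ^ 2 + (a₂ / u₂) ^ 2 + (a₃ / u₃) ^ 2 +
        (a₁ / v₁) ^ 2 + (a₂ / v₂) ^ 2 + (a₃ / v₃) ^ 2) := by
  obtain ⟨p₁, q₁⟩ := pair_bounds a₁ hu₁ hv₁
  obtain ⟨p₂, q₂⟩ := pair_bounds a₂ hu₂ hv₂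
  obtain ⟨p₃, q₃⟩ := pair_bounds a₃ hu₃ hv₃
  have hne : a₁ ≠ 0 ∨ a₂ ≠ 0 ∨ a₃ ≠ 0 := by tauto
  rcases hne with ha | ha | ha
  · obtain ⟨p, q⟩ := pair_bounds_strict hu₁ hv₁ h₁ ha
    constructor <;> linarith
  · obtain ⟨p, q⟩ := pair_bounds_strict hu₂ hv₂ h₂ ha
    constructor <;> linarith
  · obtain ⟨p, q⟩ := pair_bounds_strict hu₃ hv₃ h₃ ha
    constructor <;> linarith

/-- under the genericity conditions, every nonzero point of
`s₊` (resp. `s₋`) satisfies `C₁ > |C₂| > 0`, with `C₂ > 0` on `s₊` and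
`C₂ < 0` on `s₋`; hence it lies on a regular adjoint orbit with `c₂ ≠ 0`. -/
theorem stmt7 (l1 l2 l3 l4 : ℝ)
    (hd12 : l1 ≠ l2) (hd13 : l1 ≠ l3) (hd14 : l1 ≠ l4)
    (hd23 : l2 ≠ l3) (hd24 : l2 ≠ l4) (hd34 : l3 ≠ l4)
    (hp12 : 0 < l1 + l2) (hp13 : 0 < l1 + l3) (hp14 : 0 < l1 + l4)
    (hp23 : 0 < l2 + l3) (hp24 : 0 < l2 + l4) (hp34 : 0 < l3 + l4)
    (hg1 : l1 + l4 ≠ l2 + l3) (hg2 : l2 + l4 ≠ l1 + l3) (hg3 : l3 + l4 ≠ l1 + l2)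
    (ε a₁ a₂ a₃ : ℝ) (hε : ε = 1 ∨ ε = -1)
    (h0 : ¬(a₁ = 0 ∧ a₂ = 0 ∧ a₃ = 0)) :
    (0 < |C2fn (sPoint l1 l2 l3 l4 ε a₁ a₂ a₃)| ∧
      |C2fn (sPoint l1 l2 l3 l4 ε a₁ a₂ a₃)| < C1fn (sPoint l1 l2 l3 l4 ε a₁ a₂ a₃)) ∧
    (ε = 1 → 0 < C2fn (sPoint l1 l2 l3 l4 ε a₁ a₂ a₃)) ∧
    (ε = -1 → C2fn (sPoint l1 l2 l3 l4 ε a₁ a₂ a₃) < 0) := by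
  obtain ⟨hpos, hlt⟩ := sum_bounds hp14 hp23 hp24 hp13 hp34 hp12 hg1 hg2 hg3 h0
  set S := a₁ / (l1 + l4) * (a₁ / (l2 + l3)) + a₂ / (l2 + l4) * (a₂ / (l1 + l3)) +
    a₃ / (l3 + l4) * (a₃ / (l1 + l2)) with hS
  have hC2 : C2fn (sPoint l1 l2 l3 l4 ε a₁ a₂ a₃) = ε * S := by
    simp only [C2fn, sPoint, Matrix.cons_val, hS]
    ring
  have hsq : ε ^ 2 = 1 := by rcases hε with rfl | rfl <;> norm_num
  have hC1 : C1fn (sPoint l1 l2 l3 l4 ε a₁ a₂ a₃) =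
      (1 / 2) * ((a₁ / (l1 + l4)) ^ 2 + (a₂ / (l2 + l4)) ^ 2 + (a₃ / (l3 + l4)) ^ 2 +
        (a₁ / (l2 + l3)) ^ 2 + (a₂ / (l1 + l3)) ^ 2 + (a₃ / (l1 + l2)) ^ 2) := by
    simp only [C1fn, sPoint, Matrix.cons_val, mul_div_assoc, mul_pow, hsq, one_mul]
  have habs : |ε * S| = S := by
    rcases hε with rfl | rfl <;> simp [abs_of_pos hpos]
  rw [hC1, hC2, habs]
  refine ⟨⟨hpos, hlt⟩, ?_, ?_⟩
  · rintro rfl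
    linarith
  · rintro rfl
    linarith
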